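/- Let N ≥ 1, H = (H₁,…,H_N) ∈ (0,1)^N and let d be a real number with 0 < d < Σ_{ℓ=1}^N 1/H_ℓ. Then there is a finite constant C > 0 such that for every s ∈ [0,1]^N, ∫_{[0,1]^N} ( Σ_{ℓ=1}^N |s_ℓ − t_ℓ|^{H_ℓ} )^{−d} dt ≤ C; in particular the function u ↦ (Σ_{ℓ=1}^N |u_ℓ|^{H_ℓ})^{−d} is Lebesgue integrable on [−1,1]^N. -/

import Mathlib

open MeasureTheory

/-! Write `θ = d / ∑ ℓ, 1 / H ℓ`, so that `θ < 1` and `d = ∑ ℓ, θ / H ℓ`. For `0 ≤ d`, bounding the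
sum `S = ∑ ℓ, |u ℓ| ^ H ℓ` below by each of its terms in `S ^ (-d) = ∏ ℓ, S ^ (-θ / H ℓ)` gives
`S ^ (-d) ≤ ∏ ℓ, |u ℓ| ^ (-θ)`, a product of locally integrable functions of one variable. For
`s ∈ A`, the integral over `t ∈ B` of a nonnegative function of `s - t` is at most its integral over
`A - B`, whence the uniformity in `s`. -/

/-- The distance from `u` to the origin in the anisotropic metric `ρ` with exponents `H`, so that
`ρ(s, t) = anisotropicGauge H (s - t)` by translation invariance. -/
noncomputable def anisotropicGauge {ι : Type*} [Fintype ι] (H u : ι → ℝ) : ℝ :=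
  ∑ ℓ, |u ℓ| ^ H ℓ

lemma sum_rpow_neg_sum_le_prod_rpow_neg {ι : Type*} {s : Finset ι} {x a : ι → ℝ}
    (hx : ∀ i ∈ s, 0 < x i) (ha : ∀ i ∈ s, 0 ≤ a i) :
    (∑ i ∈ s, x i) ^ (-∑ i ∈ s, a i) ≤ ∏ i ∈ s, x i ^ (-a i) := by
  rcases s.eq_empty_or_nonempty with rfl | hs
  · simp
  have hsum : 0 < ∑ i ∈ s, x i := Finset.sum_pos hx hs
  calc (∑ i ∈ s, x i) ^ (-∑ i ∈ s, a i)
      = ∏ i ∈ s, (∑ j ∈ s, x j) ^ (-a i) := by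
        rw [← Finset.sum_neg_distrib, Real.rpow_sum_of_pos hsum]
    _ ≤ ∏ i ∈ s, x i ^ (-a i) :=
        Finset.prod_le_prod (fun i _ => Real.rpow_nonneg hsum.le _) fun i hi =>
          Real.rpow_le_rpow_of_nonpos (hx i hi)
            (Finset.single_le_sum (fun j hj => (hx j hj).le) hi) (neg_nonpos.2 (ha i hi))

lemma locallyIntegrable_abs_rpow {r : ℝ} (hr : -1 < r) :
    LocallyIntegrable fun x : ℝ => |x| ^ r := by
  refine locallyIntegrable_of_norm_le_rpow (C := 1) (α := -r) (by simp)
    (by simpa using neg_lt.1 hr) (.of_forall fun x => ?_)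
    (by fun_prop : Measurable fun x : ℝ => |x| ^ r).aestronglyMeasurable
  rw [Real.norm_of_nonneg (Real.rpow_nonneg (abs_nonneg x) r), Real.norm_eq_abs, neg_neg, one_mul]

lemma locallyIntegrable_fintype_prod {ι : Type*} [Fintype ι] {X : ι → Type*}
    [∀ i, TopologicalSpace (X i)] [∀ i, MeasurableSpace (X i)] {μ : ∀ i, Measure (X i)}
    [∀ i, SigmaFinite (μ i)] {𝕜 : Type*} [RCLike 𝕜] {f : ∀ i, X i → 𝕜}
    (hf : ∀ i, LocallyIntegrable (f i) (μ i)) :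
    LocallyIntegrable (fun x : ∀ i, X i => ∏ i, f i (x i)) (Measure.pi μ) := by
  intro x
  choose s hs hfs using fun i => hf i (x i)
  refine ⟨Set.univ.pi s, set_pi_mem_nhds Set.finite_univ fun i _ => hs i, ?_⟩
  rw [IntegrableOn, Measure.restrict_pi_pi]
  exact Integrable.fintype_prod_dep hfs

section TranslationInvariant

open scoped Pointwise

variable {G : Type*} [AddGroup G] [MeasurableSpace G] {μ : Measure G}
  [μ.IsNegInvariant] [μ.IsAddLeftInvariant]

lemma setLIntegral_comp_sub_left_le [MeasurableAdd G] [MeasurableNeg G]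
    (f : G → ENNReal) {s : G} {B K : Set G} (hBK : Set.MapsTo (s - ·) B K) :
    ∫⁻ t in B, f (s - t) ∂μ ≤ ∫⁻ u in K, f u ∂μ :=
  calc ∫⁻ t in B, f (s - t) ∂μ
      ≤ ∫⁻ t in (s - ·) ⁻¹' K, f (s - t) ∂μ := lintegral_mono_set hBK
    _ = ∫⁻ u in K, f u ∂μ :=
        (μ.measurePreserving_sub_left s).setLIntegral_comp_preimage_emb
          (measurableEmbedding_subLeft s) f K

lemma exists_setLIntegral_comp_sub_left_le [TopologicalSpace G] [IsTopologicalAddGroup G]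
    [BorelSpace G] {f : G → ℝ} (hf : LocallyIntegrable f μ) {A B : Set G}
    (hA : IsCompact A) (hB : IsCompact B) :
    ∃ C : ℝ, 0 < C ∧ ∀ s ∈ A, ∫⁻ t in B, ENNReal.ofReal (f (s - t)) ∂μ ≤ ENNReal.ofReal C := by
  set I := ∫⁻ u in A - B, ENNReal.ofReal (f u) ∂μ
  have hAB : IsCompact (A - B) := sub_eq_add_neg A B ▸ hA.add hB.neg
  have hI : I ≠ ⊤ := (hf.integrableOn_isCompact hAB).lintegral_lt_top.ne
  refine ⟨I.toReal + 1, by positivity, fun s hs => ?_⟩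
  calc ∫⁻ t in B, ENNReal.ofReal (f (s - t)) ∂μ
      ≤ I := setLIntegral_comp_sub_left_le (fun u => ENNReal.ofReal (f u)) fun _ ht =>
        Set.sub_mem_sub hs ht
    _ = ENNReal.ofReal I.toReal := (ENNReal.ofReal_toReal hI).symm
    _ ≤ ENNReal.ofReal (I.toReal + 1) :=
        ENNReal.ofReal_le_ofReal (le_add_of_nonneg_right zero_le_one)

end TranslationInvariant

namespace anisotropicGauge

variable {ι : Type*} [Fintype ι] {H : ι → ℝ}

lemma nonneg (H u : ι → ℝ) : 0 ≤ anisotropicGauge H u :=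
  Finset.sum_nonneg fun ℓ _ => Real.rpow_nonneg (abs_nonneg (u ℓ)) (H ℓ)

lemma measurable (H : ι → ℝ) : Measurable (anisotropicGauge H) := by
  unfold anisotropicGauge
  fun_prop

lemma continuous (hH : ∀ ℓ, 0 ≤ H ℓ) : Continuous (anisotropicGauge H) :=
  continuous_finsetSum _ fun ℓ _ =>
    (continuous_apply ℓ).abs.rpow_const fun _ => Or.inr (hH ℓ)

lemma rpow_neg_sum_le_prod {a u : ι → ℝ} (ha : ∀ ℓ, 0 ≤ a ℓ) (hu : ∀ ℓ, u ℓ ≠ 0) :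
    anisotropicGauge H u ^ (-∑ ℓ, a ℓ) ≤ ∏ ℓ, |u ℓ| ^ (-(H ℓ * a ℓ)) :=
  calc anisotropicGauge H u ^ (-∑ ℓ, a ℓ)
      ≤ ∏ ℓ, (|u ℓ| ^ H ℓ) ^ (-a ℓ) :=
        sum_rpow_neg_sum_le_prod_rpow_neg
          (fun ℓ _ => Real.rpow_pos_of_pos (abs_pos.2 (hu ℓ)) (H ℓ)) fun ℓ _ => ha ℓ
    _ = ∏ ℓ, |u ℓ| ^ (-(H ℓ * a ℓ)) :=
        Finset.prod_congr rfl fun ℓ _ => by rw [← Real.rpow_mul (abs_nonneg _), mul_neg]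

lemma locallyIntegrable_rpow_neg_sum {a : ι → ℝ} (ha : ∀ ℓ, 0 ≤ a ℓ)
    (haH : ∀ ℓ, H ℓ * a ℓ < 1) :
    LocallyIntegrable fun u => anisotropicGauge H u ^ (-∑ ℓ, a ℓ) := by
  have hprod : LocallyIntegrable fun u : ι → ℝ => ∏ ℓ, |u ℓ| ^ (-(H ℓ * a ℓ)) :=
    locallyIntegrable_fintype_prod fun ℓ => locallyIntegrable_abs_rpow (neg_lt_neg (haH ℓ))
  -- On the coordinate hyperplanes the pointwise bound can fail, as `0 ^ x = 0` for `x < 0`.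
  have hne : ∀ᵐ u : ι → ℝ, ∀ ℓ, u ℓ ≠ 0 :=
    ae_all_iff.2 fun ℓ => Measure.ae_eval_ne (fun _ => volume) ℓ 0
  refine hprod.mono ((measurable H).pow_const _).aestronglyMeasurable ?_
  filter_upwards [hne] with u hu
  rw [Real.norm_of_nonneg (Real.rpow_nonneg (nonneg H u) _)]
  exact (rpow_neg_sum_le_prod ha hu).trans (Real.le_norm_self _)

theorem locallyIntegrable_rpow_neg (hH : ∀ ℓ, 0 < H ℓ) {d : ℝ} (hd : d < ∑ ℓ, 1 / H ℓ) :
    LocallyIntegrable fun u => anisotropicGauge H u ^ (-d) := by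
  rcases le_total d 0 with hd0 | hd0
  · exact ((continuous fun ℓ => (hH ℓ).le).rpow_const fun _ =>
      Or.inr (neg_nonneg.2 hd0)).locallyIntegrable
  have hQ : 0 < ∑ ℓ, 1 / H ℓ := hd0.trans_lt hd
  set θ := d / ∑ ℓ, 1 / H ℓ
  have hsum : ∑ ℓ, θ * (1 / H ℓ) = d := by
    rw [← Finset.mul_sum, div_mul_cancel₀ d hQ.ne']
  have hθ : ∀ ℓ, H ℓ * (θ * (1 / H ℓ)) < 1 := fun ℓ => by
    rw [mul_left_comm, mul_one_div_cancel (hH ℓ).ne', mul_one]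
    exact (div_lt_one hQ).2 hd
  rw [← hsum]
  exact locallyIntegrable_rpow_neg_sum
    (fun ℓ => mul_nonneg (div_nonneg hd0 hQ.le) (one_div_pos.2 (hH ℓ)).le) hθ

end anisotropicGauge

theorem statement_14_general {ι : Type*} [Fintype ι] {H : ι → ℝ} (hH : ∀ ℓ, 0 < H ℓ) {d : ℝ}
    (hd : d < ∑ ℓ, 1 / H ℓ) {A B : Set (ι → ℝ)} (hA : IsCompact A) (hB : IsCompact B) :
    ∃ C : ℝ, 0 < C ∧
      (∀ s ∈ A, ∫⁻ t in B, ENNReal.ofReal (anisotropicGauge H (s - t) ^ (-d))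
        ≤ ENNReal.ofReal C) ∧
      LocallyIntegrable fun u => anisotropicGauge H u ^ (-d) := by
  have hint := anisotropicGauge.locallyIntegrable_rpow_neg hH hd
  obtain ⟨C, hC, hle⟩ := exists_setLIntegral_comp_sub_left_le hint hA hB
  exact ⟨C, hC, hle, hint⟩

theorem statement_14 (N : ℕ) (hN : 1 ≤ N) (H : Fin N → ℝ)
    (hH : ∀ ℓ, H ℓ ∈ Set.Ioo (0:ℝ) 1) (d : ℝ) (hd0 : 0 < d)
    (hd : d < ∑ ℓ, 1 / H ℓ) :
    ∃ C : ℝ, 0 < C ∧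
      (∀ s ∈ Set.Icc (0 : Fin N → ℝ) 1,
        (∫⁻ t in Set.Icc (0 : Fin N → ℝ) 1,
            ENNReal.ofReal ((∑ ℓ, |s ℓ - t ℓ| ^ (H ℓ)) ^ (-d)))
          ≤ ENNReal.ofReal C) ∧
      IntegrableOn (fun u : Fin N → ℝ => (∑ ℓ, |u ℓ| ^ (H ℓ)) ^ (-d))
        (Set.Icc (-1 : Fin N → ℝ) 1) :=
  let ⟨C, hC, hle, hint⟩ :=
    statement_14_general (fun ℓ => (hH ℓ).1) hd isCompact_Icc isCompact_Icc
  ⟨C, hC, hle, hint.integrableOn_isCompact isCompact_Icc⟩
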